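/- Let 1<p<∞, μ>0, η>0 and w ∈ P(ℝ₊). Then there exist positive numbers C and L (depending only on w, p, η, μ, not on u) such that for every u ∈ C_c^1((0,η]): ∫_0^η |u'(t)|^p W_p(t) dt ≥ Λ_p ∫_0^η |u(t)|^p W_p(t) / F_η(t)^p dt + C ∫_0^η |u(t)|^p W_p(t) / ( F_η(t)^p G_η(t)^2 ) dt − L |u(η)|^p. -/

import Mathlib

open MeasureTheory Set

/-- `f_η(t) = μ + ∫_t^η w(s)⁻¹ ds`  (case `w ∈ P(ℝ₊)`). -/
noncomputable def fP (w : ℝ → ℝ) (μ η t : ℝ) : ℝ := μ + ∫ s in t..η, (w s)⁻¹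

/-- `F_η(t) = w(t) f_η(t)`. -/
noncomputable def FP (w : ℝ → ℝ) (μ η t : ℝ) : ℝ := w t * fP w μ η t

/-- `G_η(t) = μ + ∫_t^η F_η(s)⁻¹ ds`. -/
noncomputable def GP (w : ℝ → ℝ) (μ η t : ℝ) : ℝ := μ + ∫ s in t..η, (FP w μ η s)⁻¹

/-- `W_p(t) = w(t)^(p-1)`. -/
noncomputable def Wp (w : ℝ → ℝ) (p t : ℝ) : ℝ := w t ^ (p - 1)

/-!
Write `q` for the conjugate exponent `p'`. If `θ ≥ 0` solves the Riccati inequality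
`V + (p - 1) θ^q / w ≤ θ'`, then Young's inequality gives
`V |u|^p - |u'|^p w^(p-1) ≤ (θ |u|^p)'`. Integrating over `[x, η]`, where the boundary term
`θ(x) |u(x)|^p` has the favourable sign, and letting `x → 0⁺` yields
`∫ V |u|^p ≤ ∫ |u'|^p w^(p-1) + θ(η) |u(η)|^p`.

For constant `v`, the function `θ = v f_η^(1-p)` gives `V = (p - 1) (v - v^q) W_p / F_η^p`, and
`(p - 1) (v - v^q)` attains its maximum `Λ_p` at `v₀ = (1/q)^(p-1)`. The remainder comes from
perturbing this critical value to `v₀ + c / G_η`: differentiating `c / G_η` adds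
`c W_p / (F_η^p G_η^2)` to `V`, while criticality makes the loss only `O(c²) W_p / (F_η^p G_η^2)`,
so that for small `c` half of the gain survives.
-/

open Filter Topology

lemma hasDerivWithinAt_integral_left_Ioc {g : ℝ → ℝ} {a b t : ℝ} (hg : ContinuousOn g (Ioc a b))
    (ht : t ∈ Ioc a b) :
    HasDerivWithinAt (fun x => ∫ s in x..b, g s) (-g t) (Ioc a b) t := by
  obtain ⟨c, hac, hct⟩ := exists_between ht.1
  have hsub : Icc c b ⊆ Ioc a b := fun s hs => ⟨hac.trans_le hs.1, hs.2⟩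
  have hmem : t ∈ Icc c b := ⟨hct.le, ht.2⟩
  have : Fact (t ∈ Icc c b) := ⟨hmem⟩
  have hderiv : HasDerivWithinAt (fun x => ∫ s in x..b, g s) (-g t) (Icc c b) t :=
    intervalIntegral.integral_hasDerivWithinAt_left
      ((hg.mono fun s hs => hsub ⟨hct.le.trans hs.1, hs.2⟩).intervalIntegrable_of_Icc ht.2)
      ((hg.mono hsub).stronglyMeasurableAtFilter_nhdsWithin measurableSet_Icc t)
      ((hg.mono hsub) t hmem)
  refine hderiv.mono_of_mem_nhdsWithin ?_
  filter_upwards [self_mem_nhdsWithin, mem_nhdsWithin_of_mem_nhds (Ioi_mem_nhds hct)]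
    with s hs hcs using ⟨hcs.le, hs.2⟩

lemma intervalIntegrable_and_integral_le_of_forall_integral_le {f : ℝ → ℝ} {a b K : ℝ} (hab : a < b)
    (hf : ∀ x ∈ Ioc a b, IntervalIntegrable f volume x b) (hf0 : ∀ t ∈ Ioc a b, 0 ≤ f t)
    (hK : ∀ x ∈ Ioc a b, ∫ t in x..b, f t ≤ K) :
    IntervalIntegrable f volume a b ∧ ∫ t in a..b, f t ≤ K := by
  obtain ⟨x, -, hx, hxa⟩ := exists_seq_strictAnti_tendsto' hab
  have hcover := aecover_Ioc_of_Ioc (μ := volume) hxa (tendsto_const_nhds (x := b))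
  have hrestrict (n : ℕ) :
      (volume.restrict (Ioc a b)).restrict (Ioc (x n) b) = volume.restrict (Ioc (x n) b) :=
    Measure.restrict_restrict_of_subset (Ioc_subset_Ioc_left (hx n).1.le)
  have hle (n : ℕ) : ∫ t in Ioc (x n) b, f t ∂volume.restrict (Ioc a b) ≤ K := by
    rw [hrestrict, ← intervalIntegral.integral_of_le (hx n).2.le]
    exact hK _ (Ioo_subset_Ioc_self (hx n))
  have hint : IntegrableOn f (Ioc a b) := by
    refine hcover.integrable_of_integral_bounded_of_nonneg_ae K (fun n => ?_)
      ((ae_restrict_iff' measurableSet_Ioc).2 (.of_forall hf0)) (.of_forall hle)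
    rw [IntegrableOn, hrestrict]
    exact (hf _ (Ioo_subset_Ioc_self (hx n))).1
  rw [intervalIntegrable_iff_integrableOn_Ioc_of_le hab.le, intervalIntegral.integral_of_le hab.le]
  exact ⟨hint, le_of_tendsto' (hcover.integral_tendsto_of_countably_generated hint) hle⟩

lemma intervalIntegrable_of_continuousOn_Ioc_of_eventually_eq_zero {E : Type*}
    [NormedAddCommGroup E] {f : ℝ → E} {a b : ℝ} (hab : a < b) (hf : ContinuousOn f (Ioc a b))
    (hf0 : ∀ᶠ t in 𝓝[>] a, f t = 0) :
    IntervalIntegrable f volume a b := by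
  obtain ⟨c, hac, hc⟩ := mem_nhdsGT_iff_exists_Ioc_subset.1
    (inter_mem hf0 (Ioc_mem_nhdsGT hab))
  have hcb : c ≤ b := (hc (right_mem_Ioc.2 hac)).2.2
  refine (IntervalIntegrable.congr (f := 0) ?_ intervalIntegrable_const).trans
    ((hf.mono fun t ht => ⟨lt_of_lt_of_le hac ht.1, ht.2⟩).intervalIntegrable_of_Icc hcb)
  intro t ht
  rw [uIoc_of_le hac.le] at ht
  exact (hc ht).1.symm

lemma eventually_deriv_eq_zero_of_eventually_eq_zero {u u' : ℝ → ℝ} {a b : ℝ} (hab : a < b)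
    (hu : ∀ t ∈ Ioc a b, HasDerivWithinAt u (u' t) (Ioc a b) t) (hu0 : ∀ᶠ t in 𝓝[>] a, u t = 0) :
    ∀ᶠ t in 𝓝[>] a, u' t = 0 := by
  filter_upwards [eventually_eventually_nhdsWithin.2 hu0, Ioo_mem_nhdsGT hab] with t hu0t ht
  rw [isOpen_Ioi.nhdsWithin_eq ht.1] at hu0t
  exact ((hu t (Ioo_subset_Ioc_self ht)).hasDerivAt (Ioc_mem_nhds ht.1 ht.2)).unique
    ((hasDerivAt_const t (0 : ℝ)).congr_of_eventuallyEq hu0t)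

lemma exists_forall_le_add_mul_sub_sq {f : ℝ → ℝ} {a b f' : ℝ} (hab : a < b)
    (hf : ContDiffOn ℝ 2 f (Icc a b)) (hf' : HasDerivWithinAt f f' (Icc a b) a) :
    ∃ M, 0 < M ∧ ∀ x ∈ Icc a b, f x ≤ f a + f' * (x - a) + M * (x - a) ^ 2 := by
  obtain ⟨M, hM⟩ := exists_taylor_mean_remainder_bound (n := 1) hab.le
    (hf.of_le (by norm_num [one_add_one_eq_two]))
  refine ⟨max M 1, by positivity, fun x hx => ?_⟩
  have htaylor : taylorWithinEval f 1 (Icc a b) a x = f a + f' * (x - a) := by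
    rw [taylorWithinEval_succ, taylor_within_zero_eval, iteratedDerivWithin_one,
      hf'.derivWithin (uniqueDiffOn_Icc hab a (left_mem_Icc.2 hab.le))]
    simp [mul_comm]
  calc f x ≤ f a + f' * (x - a) + M * (x - a) ^ 2 := by
        have := (le_abs_self _).trans (hM x hx)
        rw [htaylor, one_add_one_eq_two] at this
        linarith
    _ ≤ f a + f' * (x - a) + max M 1 * (x - a) ^ 2 := by gcongr; exact le_max_left M 1

section HolderConjugate

variable {p q : ℝ}

lemma exists_rpow_le_near_critical (hpq : p.HolderConjugate q) :
    ∃ M, 0 < M ∧ ∀ s ∈ Icc (0 : ℝ) 1, q⁻¹ ^ p + (p - 1) * (q⁻¹ ^ (p - 1) + s) ^ q ≤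
      (p - 1) * (q⁻¹ ^ (p - 1) + s) + M * s ^ 2 := by
  have hq : 0 < q⁻¹ := hpq.symm.inv_pos
  have hp : 0 < p - 1 := hpq.sub_one_pos
  set v₀ := q⁻¹ ^ (p - 1) with hv₀
  have hv₀_pos : 0 < v₀ := by positivity
  have hvalue : v₀ ^ q = q⁻¹ ^ p := by rw [← Real.rpow_mul hq.le, hpq.sub_one_mul_conj]
  have hderiv : HasDerivAt (fun v => v ^ q) 1 v₀ := by
    convert Real.hasDerivAt_rpow_const (Or.inl hv₀_pos.ne') using 1
    have hexp : (p - 1) * (q - 1) = 1 := by linarith [hpq.mul_eq_add]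
    rw [← Real.rpow_mul hq.le, hexp, Real.rpow_one, mul_inv_cancel₀ hpq.symm.ne_zero]
  have hsmooth : ContDiffOn ℝ 2 (fun v : ℝ => v ^ q) (Icc v₀ (v₀ + 1)) := fun v hv =>
    (Real.contDiffAt_rpow_const_of_ne (hv₀_pos.trans_le hv.1).ne').contDiffWithinAt
  have hcritical : q⁻¹ ^ p + (p - 1) * q⁻¹ ^ p = (p - 1) * v₀ := by
    have hpv : q⁻¹ ^ p = v₀ * q⁻¹ := by rw [hv₀, ← Real.rpow_add_one hq.ne', sub_add_cancel]
    have hqp : p * q⁻¹ = p - 1 := by rw [← div_eq_mul_inv, hpq.div_conj_eq_sub_one]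
    linear_combination p * hpv + v₀ * hqp
  obtain ⟨M, hM, hbound⟩ :=
    exists_forall_le_add_mul_sub_sq (lt_add_one v₀) hsmooth hderiv.hasDerivWithinAt
  refine ⟨(p - 1) * M, by positivity, fun s hs => ?_⟩
  have hs_bound := hbound (v₀ + s) ⟨by linarith [hs.1], by linarith [hs.2]⟩
  rw [hvalue, add_sub_cancel_left] at hs_bound
  linarith [mul_le_mul_of_nonneg_left hs_bound hp.le]

lemma exists_hardy_remainder_const (hpq : p.HolderConjugate q) {μ : ℝ} (hμ : 0 < μ) :
    ∃ c, 0 < c ∧ ∀ g, μ ≤ g →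
      q⁻¹ ^ p + c / 2 / g ^ 2 + (p - 1) * (q⁻¹ ^ (p - 1) + c / g) ^ q ≤
        c / g ^ 2 + (p - 1) * (q⁻¹ ^ (p - 1) + c / g) := by
  obtain ⟨M, hM, hbound⟩ := exists_rpow_le_near_critical hpq
  refine ⟨min μ (2 * M)⁻¹, by positivity, fun g hg => ?_⟩
  set c := min μ (2 * M)⁻¹
  have hg0 : 0 < g := hμ.trans_le hg
  have hMc : M * c ≤ 1 / 2 := calc
    M * c ≤ M * (2 * M)⁻¹ := by gcongr; exact min_le_right _ _
    _ = 1 / 2 := by field_simp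
  have hquad : M * (c / g) ^ 2 ≤ c / 2 / g ^ 2 := calc
    M * (c / g) ^ 2 = M * c * (c / g ^ 2) := by ring
    _ ≤ 1 / 2 * (c / g ^ 2) := by gcongr
    _ = c / 2 / g ^ 2 := by ring
  have hsplit : c / g ^ 2 = c / 2 / g ^ 2 + c / 2 / g ^ 2 := by ring
  have hcg : c / g ≤ 1 := (div_le_one hg0).2 ((min_le_left _ _).trans hg)
  linarith [hbound (c / g) ⟨by positivity, hcg⟩]

lemma young_weighted (hpq : p.HolderConjugate q) {a b ω θ : ℝ} (ha : 0 ≤ a) (hb : 0 ≤ b)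
    (hω : 0 < ω) (hθ : 0 ≤ θ) :
    p * (θ * (b ^ (p - 1) * a)) ≤ a ^ p * ω ^ (p - 1) + (p - 1) * (θ ^ q / ω) * b ^ p := by
  have hp := hpq.pos
  have hq := hpq.symm.ne_zero
  have hyoung := Real.young_inequality_of_nonneg (a := a * ω ^ q⁻¹)
    (b := θ * b ^ (p - 1) * (ω ^ q⁻¹)⁻¹) (by positivity) (by positivity) hpq
  have hprod : a * ω ^ q⁻¹ * (θ * b ^ (p - 1) * (ω ^ q⁻¹)⁻¹) = θ * (b ^ (p - 1) * a) := by
    field_simp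
  have hleft : (a * ω ^ q⁻¹) ^ p = a ^ p * ω ^ (p - 1) := by
    rw [Real.mul_rpow ha (by positivity), ← Real.rpow_mul hω.le, inv_mul_eq_div,
      hpq.div_conj_eq_sub_one]
  have hright : (θ * b ^ (p - 1) * (ω ^ q⁻¹)⁻¹) ^ q = θ ^ q / ω * b ^ p := by
    rw [Real.mul_rpow (by positivity) (by positivity), Real.mul_rpow hθ (by positivity),
      ← Real.rpow_mul hb, hpq.sub_one_mul_conj, Real.inv_rpow (by positivity),
      Real.rpow_inv_rpow hω.le hq]
    ring
  rw [hprod, hleft, hright] at hyoung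
  calc p * (θ * (b ^ (p - 1) * a))
      ≤ p * (a ^ p * ω ^ (p - 1) / p + θ ^ q / ω * b ^ p / q) := by gcongr
    _ = a ^ p * ω ^ (p - 1) + p / q * (θ ^ q / ω) * b ^ p := by field_simp
    _ = a ^ p * ω ^ (p - 1) + (p - 1) * (θ ^ q / ω) * b ^ p := by rw [hpq.div_conj_eq_sub_one]

lemma sub_le_deriv_mul_abs_rpow_of_riccati (hpq : p.HolderConjugate q) {V ω θ θ' x y : ℝ}
    (hω : 0 < ω) (hθ : 0 ≤ θ) (hriccati : V + (p - 1) * (θ ^ q / ω) ≤ θ') :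
    V * |x| ^ p - |y| ^ p * ω ^ (p - 1) ≤ θ' * |x| ^ p + θ * (p * |x| ^ (p - 2) * x * y) := by
  have hp := hpq.pos
  have hpow : |x| ^ (p - 2) * |x| = |x| ^ (p - 1) := by
    rcases eq_or_ne x 0 with rfl | hx
    · simp [Real.zero_rpow hpq.sub_one_ne_zero]
    · rw [← Real.rpow_add_one (abs_ne_zero.2 hx)]
      congr 1
      ring
  have hsign : -(|x| ^ (p - 1) * |y|) ≤ |x| ^ (p - 2) * x * y := by
    rw [← hpow, mul_assoc, mul_assoc, ← abs_mul, ← mul_neg]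
    gcongr
    exact neg_abs_le _
  have hcross : -(p * (θ * (|x| ^ (p - 1) * |y|))) ≤ θ * (p * |x| ^ (p - 2) * x * y) := calc
    _ = p * θ * -(|x| ^ (p - 1) * |y|) := by ring
    _ ≤ p * θ * (|x| ^ (p - 2) * x * y) := by gcongr
    _ = θ * (p * |x| ^ (p - 2) * x * y) := by ring
  have hmul : (V + (p - 1) * (θ ^ q / ω)) * |x| ^ p ≤ θ' * |x| ^ p := by gcongr
  linarith [young_weighted hpq (abs_nonneg y) (abs_nonneg x) hω hθ]

variable {V w θ θ' u u' : ℝ → ℝ} {a b : ℝ}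

lemma integral_add_le_of_riccati_Icc (hpq : p.HolderConjugate q) (hab : a ≤ b)
    (hw : ∀ t ∈ Icc a b, 0 < w t) (hθ0 : ∀ t ∈ Icc a b, 0 ≤ θ t)
    (hθ : ∀ t ∈ Icc a b, HasDerivWithinAt θ (θ' t) (Icc a b) t)
    (hriccati : ∀ t ∈ Icc a b, V t + (p - 1) * (θ t ^ q / w t) ≤ θ' t)
    (hu : ∀ t ∈ Icc a b, HasDerivWithinAt u (u' t) (Icc a b) t)
    (hVu : IntervalIntegrable (fun t => V t * |u t| ^ p) volume a b)
    (hwu : IntervalIntegrable (fun t => |u' t| ^ p * w t ^ (p - 1)) volume a b) :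
    (∫ t in a..b, V t * |u t| ^ p) + θ a * |u a| ^ p ≤
      (∫ t in a..b, |u' t| ^ p * w t ^ (p - 1)) + θ b * |u b| ^ p := by
  have hderiv (t) (ht : t ∈ Icc a b) : HasDerivWithinAt (fun s => θ s * |u s| ^ p)
      (θ' t * |u t| ^ p + θ t * (p * |u t| ^ (p - 2) * u t * u' t)) (Icc a b) t :=
    (hθ t ht).mul ((hasDerivAt_abs_rpow (u t) hpq.lt).comp_hasDerivWithinAt t (hu t ht))
  have hftc := intervalIntegral.integral_le_sub_of_hasDeriv_right_of_le hab
    (fun t ht => (hderiv t ht).continuousWithinAt)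
    (fun t ht => ((hderiv t (Ioo_subset_Icc_self ht)).hasDerivAt
      (Icc_mem_nhds ht.1 ht.2)).hasDerivWithinAt)
    ((intervalIntegrable_iff_integrableOn_Icc_of_le hab).1 (hVu.sub hwu))
    (fun t ht => have ht' := Ioo_subset_Icc_self ht
      sub_le_deriv_mul_abs_rpow_of_riccati hpq (hw t ht') (hθ0 t ht') (hriccati t ht'))
  rw [intervalIntegral.integral_sub hVu hwu] at hftc
  linarith

lemma intervalIntegrable_and_integral_le_of_riccati (hpq : p.HolderConjugate q) (hab : a < b)
    (hV : ContinuousOn V (Ioc a b)) (hV0 : ∀ t ∈ Ioc a b, 0 ≤ V t)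
    (hw : ∀ t ∈ Ioc a b, 0 < w t) (hθ0 : ∀ t ∈ Ioc a b, 0 ≤ θ t)
    (hθ : ∀ t ∈ Ioc a b, HasDerivWithinAt θ (θ' t) (Ioc a b) t)
    (hriccati : ∀ t ∈ Ioc a b, V t + (p - 1) * (θ t ^ q / w t) ≤ θ' t)
    (hu : ∀ t ∈ Ioc a b, HasDerivWithinAt u (u' t) (Ioc a b) t)
    (hwu : IntervalIntegrable (fun t => |u' t| ^ p * w t ^ (p - 1)) volume a b) :
    IntervalIntegrable (fun t => V t * |u t| ^ p) volume a b ∧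
      ∫ t in a..b, V t * |u t| ^ p ≤
        (∫ t in a..b, |u' t| ^ p * w t ^ (p - 1)) + θ b * |u b| ^ p := by
  have hVu : ContinuousOn (fun t => V t * |u t| ^ p) (Ioc a b) := hV.mul
    (ContinuousOn.rpow_const (fun t ht => (hu t ht).continuousWithinAt.abs)
      fun _ _ => Or.inr hpq.nonneg)
  have hwu0 : ∀ t ∈ Ioc a b, 0 ≤ |u' t| ^ p * w t ^ (p - 1) := fun t ht => by
    have := hw t ht
    positivity
  have hsub {x : ℝ} (hx : x ∈ Ioc a b) : Icc x b ⊆ Ioc a b := fun t ht =>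
    ⟨hx.1.trans_le ht.1, ht.2⟩
  have hVux (x) (hx : x ∈ Ioc a b) : IntervalIntegrable (fun t => V t * |u t| ^ p) volume x b :=
    (hVu.mono (hsub hx)).intervalIntegrable_of_Icc hx.2
  refine intervalIntegrable_and_integral_le_of_forall_integral_le hab hVux
    (fun t ht => mul_nonneg (hV0 t ht) (by positivity)) fun x hx => ?_
  have hwux : IntervalIntegrable (fun t => |u' t| ^ p * w t ^ (p - 1)) volume x b :=
    hwu.mono_set (uIcc_subset_uIcc (Ioc_subset_Icc_self.trans Icc_subset_uIcc hx) right_mem_uIcc)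
  have hIcc := integral_add_le_of_riccati_Icc hpq hx.2 (fun t ht => hw t (hsub hx ht))
    (fun t ht => hθ0 t (hsub hx ht)) (fun t ht => (hθ t (hsub hx ht)).mono (hsub hx))
    (fun t ht => hriccati t (hsub hx ht)) (fun t ht => (hu t (hsub hx ht)).mono (hsub hx))
    (hVux x hx) hwux
  have hmono : ∫ t in x..b, |u' t| ^ p * w t ^ (p - 1) ≤ ∫ t in a..b, |u' t| ^ p * w t ^ (p - 1) :=
    intervalIntegral.integral_mono_interval hx.1.le hx.2 le_rfl
      ((ae_restrict_iff' measurableSet_Ioc).2 (.of_forall hwu0)) hwu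
  have hboundary : 0 ≤ θ x * |u x| ^ p := mul_nonneg (hθ0 x hx) (by positivity)
  linarith

end HolderConjugate

section Weights

variable {w : ℝ → ℝ} {p q μ η c t : ℝ}

lemma le_fP (hw_pos : ∀ s ∈ Ioc 0 η, 0 < w s) (ht : t ∈ Ioc 0 η) : μ ≤ fP w μ η t :=
  le_add_of_nonneg_right <| intervalIntegral.integral_nonneg ht.2 fun s hs =>
    (inv_pos.2 (hw_pos s ⟨ht.1.trans_le hs.1, hs.2⟩)).le

lemma fP_pos (hμ : 0 < μ) (hw_pos : ∀ s ∈ Ioc 0 η, 0 < w s) (ht : t ∈ Ioc 0 η) :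
    0 < fP w μ η t :=
  hμ.trans_le (le_fP hw_pos ht)

lemma FP_pos (hμ : 0 < μ) (hw_pos : ∀ s ∈ Ioc 0 η, 0 < w s) (ht : t ∈ Ioc 0 η) :
    0 < FP w μ η t :=
  mul_pos (hw_pos t ht) (fP_pos hμ hw_pos ht)

lemma le_GP (hμ : 0 < μ) (hw_pos : ∀ s ∈ Ioc 0 η, 0 < w s) (ht : t ∈ Ioc 0 η) :
    μ ≤ GP w μ η t :=
  le_add_of_nonneg_right <| intervalIntegral.integral_nonneg ht.2 fun _ hs =>
    (inv_pos.2 (FP_pos hμ hw_pos ⟨ht.1.trans_le hs.1, hs.2⟩)).le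

lemma GP_pos (hμ : 0 < μ) (hw_pos : ∀ s ∈ Ioc 0 η, 0 < w s) (ht : t ∈ Ioc 0 η) :
    0 < GP w μ η t :=
  hμ.trans_le (le_GP hμ hw_pos ht)

lemma fP_self : fP w μ η η = μ := by simp [fP]

lemma GP_self : GP w μ η η = μ := by simp [GP]

lemma hasDerivWithinAt_fP (hw_pos : ∀ s ∈ Ioc 0 η, 0 < w s) (hw : ContinuousOn w (Ioc 0 η))
    (ht : t ∈ Ioc 0 η) : HasDerivWithinAt (fP w μ η) (-(w t)⁻¹) (Ioc 0 η) t :=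
  (hasDerivWithinAt_integral_left_Ioc (hw.inv₀ fun _ hs => (hw_pos _ hs).ne') ht).const_add μ

lemma continuousOn_FP (hw_pos : ∀ s ∈ Ioc 0 η, 0 < w s) (hw : ContinuousOn w (Ioc 0 η)) :
    ContinuousOn (FP w μ η) (Ioc 0 η) :=
  hw.mul fun _ ht => (hasDerivWithinAt_fP hw_pos hw ht).continuousWithinAt

lemma hasDerivWithinAt_GP (hμ : 0 < μ) (hw_pos : ∀ s ∈ Ioc 0 η, 0 < w s)
    (hw : ContinuousOn w (Ioc 0 η)) (ht : t ∈ Ioc 0 η) :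
    HasDerivWithinAt (GP w μ η) (-(FP w μ η t)⁻¹) (Ioc 0 η) t :=
  (hasDerivWithinAt_integral_left_Ioc
    ((continuousOn_FP hw_pos hw).inv₀ fun _ hs => (FP_pos hμ hw_pos hs).ne') ht).const_add μ

lemma continuousOn_Wp (hw_pos : ∀ s ∈ Ioc 0 η, 0 < w s) (hw : ContinuousOn w (Ioc 0 η)) :
    ContinuousOn (Wp w p) (Ioc 0 η) :=
  hw.rpow_const fun t ht => Or.inl (hw_pos t ht).ne'

lemma Wp_div_FP_rpow (hμ : 0 < μ) (hw_pos : ∀ s ∈ Ioc 0 η, 0 < w s) (ht : t ∈ Ioc 0 η) :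
    Wp w p t / FP w μ η t ^ p = (w t * fP w μ η t ^ p)⁻¹ := by
  have hwt := hw_pos t ht
  have hft := fP_pos hμ hw_pos ht
  rw [Wp, FP, Real.mul_rpow hwt.le hft.le, Real.rpow_sub_one hwt.ne']
  field_simp

/-- The solution `θ = (q^{-(p-1)} + c / G_η) f_η^{1-p}` of the Riccati inequality
`V + (p - 1) θ^q / w ≤ θ'`, where `q = p'` and `V` is the Hardy weight with remainder. For `c = 0`
it is the Riccati function of the Hardy inequality without remainder. -/
noncomputable def hardyRiccati (w : ℝ → ℝ) (p q μ η c t : ℝ) : ℝ :=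
  (q⁻¹ ^ (p - 1) + c / GP w μ η t) * fP w μ η t ^ (1 - p)

lemma hardyRiccati_self :
    hardyRiccati w p q μ η c η = (q⁻¹ ^ (p - 1) + c / μ) * μ ^ (1 - p) := by
  rw [hardyRiccati, GP_self, fP_self]

lemma hardyRiccati_nonneg (hq : 0 ≤ q) (hμ : 0 < μ) (hc : 0 ≤ c)
    (hw_pos : ∀ s ∈ Ioc 0 η, 0 < w s) (ht : t ∈ Ioc 0 η) : 0 ≤ hardyRiccati w p q μ η c t := by
  have hft := fP_pos hμ hw_pos ht
  have hGt := GP_pos hμ hw_pos ht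
  unfold hardyRiccati
  positivity

lemma hasDerivWithinAt_hardyRiccati (hμ : 0 < μ) (hw_pos : ∀ s ∈ Ioc 0 η, 0 < w s)
    (hw : ContinuousOn w (Ioc 0 η)) (ht : t ∈ Ioc 0 η) :
    HasDerivWithinAt (hardyRiccati w p q μ η c)
      (Wp w p t / FP w μ η t ^ p *
        (c / GP w μ η t ^ 2 + (p - 1) * (q⁻¹ ^ (p - 1) + c / GP w μ η t))) (Ioc 0 η) t := by
  have hwt := hw_pos t ht
  have hft := fP_pos hμ hw_pos ht
  have hGt := GP_pos hμ hw_pos ht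
  have hdv : HasDerivWithinAt (fun s => q⁻¹ ^ (p - 1) + c / GP w μ η s)
      (c / (GP w μ η t ^ 2 * FP w μ η t)) (Ioc 0 η) t := by
    refine (((hasDerivWithinAt_const t (Ioc 0 η) c).fun_div
      (hasDerivWithinAt_GP hμ hw_pos hw ht) hGt.ne').const_add _).congr_deriv ?_
    field_simp
    ring
  refine (hdv.mul ((hasDerivWithinAt_fP hw_pos hw ht).rpow_const (p := 1 - p)
    (Or.inl hft.ne'))).congr_deriv ?_
  have hpow : fP w μ η t ^ (1 - p) = fP w μ η t / fP w μ η t ^ p := by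
    rw [Real.rpow_sub hft, Real.rpow_one]
  rw [Wp_div_FP_rpow hμ hw_pos ht, Real.rpow_sub_one hft.ne', hpow, FP]
  field_simp
  ring

lemma hardyRiccati_rpow_div (hpq : p.HolderConjugate q) (hμ : 0 < μ) (hc : 0 ≤ c)
    (hw_pos : ∀ s ∈ Ioc 0 η, 0 < w s) (ht : t ∈ Ioc 0 η) :
    hardyRiccati w p q μ η c t ^ q / w t =
      Wp w p t / FP w μ η t ^ p * (q⁻¹ ^ (p - 1) + c / GP w μ η t) ^ q := by
  have hq := hpq.symm.pos
  have hft := fP_pos hμ hw_pos ht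
  have hGt := GP_pos hμ hw_pos ht
  have hexp : (1 - p) * q = -p := by linarith [hpq.sub_one_mul_conj]
  rw [Wp_div_FP_rpow hμ hw_pos ht, hardyRiccati, Real.mul_rpow (by positivity) (by positivity),
    ← Real.rpow_mul hft.le, hexp, Real.rpow_neg hft.le]
  ring

/-- The Hardy weight `W_p / F_η^p (Λ_p + C / G_η^2)`, in which the sharp term and the remainder
are collected; `Λ` stands for `Λ_p`. -/
noncomputable def hardyWeight (w : ℝ → ℝ) (p μ η Λ C t : ℝ) : ℝ :=
  Wp w p t / FP w μ η t ^ p * (Λ + C / GP w μ η t ^ 2)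

lemma hardyWeight_nonneg {Λ C : ℝ} (hΛ : 0 ≤ Λ) (hC : 0 ≤ C) (hμ : 0 < μ)
    (hw_pos : ∀ s ∈ Ioc 0 η, 0 < w s) (ht : t ∈ Ioc 0 η) : 0 ≤ hardyWeight w p μ η Λ C t := by
  have hwt := hw_pos t ht
  have hFt := FP_pos hμ hw_pos ht
  unfold hardyWeight Wp
  positivity

lemma continuousOn_hardyWeight {Λ C : ℝ} (hμ : 0 < μ) (hw_pos : ∀ s ∈ Ioc 0 η, 0 < w s)
    (hw : ContinuousOn w (Ioc 0 η)) : ContinuousOn (hardyWeight w p μ η Λ C) (Ioc 0 η) := by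
  have hG : ContinuousOn (GP w μ η) (Ioc 0 η) := fun t ht =>
    (hasDerivWithinAt_GP hμ hw_pos hw ht).continuousWithinAt
  have hFp : ContinuousOn (fun t => FP w μ η t ^ p) (Ioc 0 η) :=
    (continuousOn_FP hw_pos hw).rpow_const fun _ ht => Or.inl (FP_pos hμ hw_pos ht).ne'
  exact ((continuousOn_Wp hw_pos hw).div hFp fun _ ht =>
    (Real.rpow_pos_of_pos (FP_pos hμ hw_pos ht) p).ne').mul (continuousOn_const.add
      (continuousOn_const.div (hG.pow 2) fun _ ht => (pow_pos (GP_pos hμ hw_pos ht) 2).ne'))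

lemma hardyWeight_mul {Λ C : ℝ} (x : ℝ) :
    hardyWeight w p μ η Λ C t * x = Λ * (x * Wp w p t / FP w μ η t ^ p) +
      C * (x * Wp w p t / (FP w μ η t ^ p * GP w μ η t ^ 2)) := by
  unfold hardyWeight
  ring

lemma hardyWeight_add_hardyRiccati_le (hpq : p.HolderConjugate q) {Λ C : ℝ} (hμ : 0 < μ)
    (hc : 0 ≤ c) (hconst : ∀ g, μ ≤ g → Λ + C / g ^ 2 + (p - 1) * (q⁻¹ ^ (p - 1) + c / g) ^ q ≤
      c / g ^ 2 + (p - 1) * (q⁻¹ ^ (p - 1) + c / g))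
    (hw_pos : ∀ s ∈ Ioc 0 η, 0 < w s) (ht : t ∈ Ioc 0 η) :
    hardyWeight w p μ η Λ C t + (p - 1) * (hardyRiccati w p q μ η c t ^ q / w t) ≤
      Wp w p t / FP w μ η t ^ p *
        (c / GP w μ η t ^ 2 + (p - 1) * (q⁻¹ ^ (p - 1) + c / GP w μ η t)) := by
  have hWF : 0 ≤ Wp w p t / FP w μ η t ^ p := by
    have hwt := hw_pos t ht
    have hFt := FP_pos hμ hw_pos ht
    unfold Wp
    positivity
  rw [hardyRiccati_rpow_div hpq hμ hc hw_pos ht, hardyWeight]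
  linarith [mul_le_mul_of_nonneg_left (hconst _ (le_GP hμ hw_pos ht)) hWF]

lemma intervalIntegrable_of_hardyWeight {Λ C : ℝ} {u : ℝ → ℝ} (hη : 0 ≤ η) (hp : 0 ≤ p)
    (hμ : 0 < μ) (hΛ : 0 < Λ) (hC : 0 < C) (hw_pos : ∀ s ∈ Ioc 0 η, 0 < w s)
    (hw : ContinuousOn w (Ioc 0 η)) (hu : ContinuousOn u (Ioc 0 η))
    (hint : IntervalIntegrable (fun t => hardyWeight w p μ η Λ C t * |u t| ^ p) volume 0 η) :
    IntervalIntegrable (fun t => |u t| ^ p * Wp w p t / FP w μ η t ^ p) volume 0 η ∧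
      IntervalIntegrable (fun t => |u t| ^ p * Wp w p t / (FP w μ η t ^ p * GP w μ η t ^ 2))
        volume 0 η := by
  have hup : ContinuousOn (fun t => |u t| ^ p) (Ioc 0 η) :=
    hu.abs.rpow_const fun _ _ => Or.inr hp
  have hnonneg {A B : ℝ} (hA : 0 ≤ A) (hB : 0 ≤ B) : 0 ≤ᵐ[volume.restrict (Ioc 0 η)]
      fun t => hardyWeight w p μ η A B t * |u t| ^ p :=
    (ae_restrict_iff' measurableSet_Ioc).2 <| .of_forall fun t ht =>
      mul_nonneg (hardyWeight_nonneg hA hB hμ hw_pos ht) (by positivity)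
  have hsplit : (fun t => hardyWeight w p μ η Λ C t * |u t| ^ p) =
      (fun t => hardyWeight w p μ η Λ 0 t * |u t| ^ p) +
        fun t => hardyWeight w p μ η 0 C t * |u t| ^ p := by
    funext t
    simp only [Pi.add_apply, hardyWeight_mul]
    ring
  have hmeas : AEStronglyMeasurable (fun t => hardyWeight w p μ η Λ 0 t * |u t| ^ p)
      (volume.restrict (Ioc 0 η)) :=
    ((continuousOn_hardyWeight hμ hw_pos hw).mul hup).aestronglyMeasurable measurableSet_Ioc
  rw [hsplit, intervalIntegrable_iff_integrableOn_Ioc_of_le hη, IntegrableOn,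
    integrable_add_iff_of_nonneg hmeas (hnonneg hΛ.le le_rfl) (hnonneg le_rfl hC.le)] at hint
  simp only [hardyWeight_mul, zero_mul, zero_add, add_zero,
    integrable_const_mul_iff hΛ.ne'.isUnit, integrable_const_mul_iff hC.ne'.isUnit] at hint
  simpa only [intervalIntegrable_iff_integrableOn_Ioc_of_le hη, IntegrableOn] using hint

end Weights

lemma intervalIntegrable_abs_deriv_rpow_mul_Wp {p η : ℝ} {w u u' : ℝ → ℝ} (hp : 0 < p)
    (hη : 0 < η) (hw_pos : ∀ t ∈ Ioc 0 η, 0 < w t) (hw : ContinuousOn w (Ioc 0 η))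
    (hu : ∀ t ∈ Ioc 0 η, HasDerivWithinAt u (u' t) (Ioc 0 η) t)
    (hu' : ContinuousOn u' (Ioc 0 η)) (hu0 : ∀ᶠ t in 𝓝[>] 0, u t = 0) :
    IntervalIntegrable (fun t => |u' t| ^ p * Wp w p t) volume 0 η := by
  refine intervalIntegrable_of_continuousOn_Ioc_of_eventually_eq_zero hη
    ((hu'.abs.rpow_const fun _ _ => Or.inr hp.le).mul (continuousOn_Wp hw_pos hw)) ?_
  filter_upwards [eventually_deriv_eq_zero_of_eventually_eq_zero hη hu hu0] with t ht
  rw [ht, abs_zero, Real.zero_rpow hp.ne', zero_mul]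

theorem hardy_P_remainder_general (p μ : ℝ) (hp : 1 < p) (hμ : 0 < μ) :
    ∃ C L : ℝ, 0 < C ∧ 0 < L ∧ ∀ η, 0 < η → ∀ w : ℝ → ℝ, (∀ t ∈ Ioc 0 η, 0 < w t) →
      ContinuousOn w (Ioc 0 η) → ∀ u u' : ℝ → ℝ,
        (∀ t ∈ Ioc 0 η, HasDerivWithinAt u (u' t) (Ioc 0 η) t) →
        IntervalIntegrable (fun t => |u' t| ^ p * Wp w p t) volume 0 η →
        IntervalIntegrable (fun t => |u t| ^ p * Wp w p t / FP w μ η t ^ p) volume 0 η ∧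
        IntervalIntegrable (fun t => |u t| ^ p * Wp w p t / (FP w μ η t ^ p * GP w μ η t ^ 2))
          volume 0 η ∧
        (∫ t in (0 : ℝ)..η, |u' t| ^ p * Wp w p t) ≥
          (1 - 1 / p) ^ p * (∫ t in (0 : ℝ)..η, |u t| ^ p * Wp w p t / FP w μ η t ^ p) +
          C * (∫ t in (0 : ℝ)..η, |u t| ^ p * Wp w p t / (FP w μ η t ^ p * GP w μ η t ^ 2)) -
          L * |u η| ^ p := by
  have hpq := Real.HolderConjugate.conjExponent hp
  set q := p.conjExponent
  have hp0 := hpq.pos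
  have hq0 := hpq.symm.pos
  obtain ⟨c, hc, hconst⟩ := exists_hardy_remainder_const hpq hμ
  refine ⟨c / 2, (q⁻¹ ^ (p - 1) + c / μ) * μ ^ (1 - p), by positivity, by positivity,
    fun η hη w hw_pos hw u u' hu hu'int => ?_⟩
  rw [one_div, hpq.one_sub_inv]
  obtain ⟨hint, hle⟩ := intervalIntegrable_and_integral_le_of_riccati hpq hη
    (continuousOn_hardyWeight hμ hw_pos hw)
    (fun t => hardyWeight_nonneg (by positivity) (by positivity) hμ hw_pos) hw_pos
    (fun t => hardyRiccati_nonneg hq0.le hμ hc.le hw_pos)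
    (fun t => hasDerivWithinAt_hardyRiccati hμ hw_pos hw)
    (fun t => hardyWeight_add_hardyRiccati_le hpq hμ hc.le hconst hw_pos) hu hu'int
  obtain ⟨hsharp, hrem⟩ := intervalIntegrable_of_hardyWeight hη.le hp0.le hμ (by positivity)
    (by positivity) hw_pos hw (fun t ht => (hu t ht).continuousWithinAt) hint
  simp only [hardyWeight_mul] at hle
  rw [intervalIntegral.integral_add (hsharp.const_mul _) (hrem.const_mul _),
    intervalIntegral.integral_const_mul, intervalIntegral.integral_const_mul,
    hardyRiccati_self] at hle
  refine ⟨hsharp, hrem, ?_⟩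
  unfold Wp at hle ⊢
  linarith

/-- Weighted Hardy inequality with sharp remainder for `w ∈ P(ℝ₊)`:
there are positive constants `C, L` (independent of `u`) such that the Hardy
inequality holds with the extra remainder term `C ∫ |u|^p W_p/(F_η^p G_η^2)`
and the boundary term `- L |u(η)|^p`. -/
theorem hardy_P_remainder (p μ η : ℝ) (hp : 1 < p) (hμ : 0 < μ) (hη : 0 < η)
    (w : ℝ → ℝ)
    (hw_pos : ∀ t, 0 < t → 0 < w t)
    (hw_smooth : ContDiffOn ℝ 1 w (Set.Ioi 0))
    (hw_lim : ∃ a : ENNReal, Filter.Tendsto (fun t => ENNReal.ofReal (w t))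
        (nhdsWithin (0:ℝ) (Set.Ioi 0)) (nhds a))
    (hwP : ∀ b, 0 < b → ¬ MeasureTheory.IntegrableOn (fun s => (w s)⁻¹) (Set.Ioo 0 b)) :
    ∃ C L : ℝ, 0 < C ∧ 0 < L ∧
      ∀ u u' : ℝ → ℝ,
        (∀ t ∈ Set.Ioc (0:ℝ) η, HasDerivWithinAt u (u' t) (Set.Ioc (0:ℝ) η) t) →
        ContinuousOn u' (Set.Ioc (0:ℝ) η) →
        (∃ a, 0 < a ∧ ∀ t ≤ a, u t = 0) →
        (∫ t in (0:ℝ)..η, |u' t| ^ p * Wp w p t)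
        ≥ (1 - 1 / p) ^ p *
            (∫ t in (0:ℝ)..η, |u t| ^ p * Wp w p t / FP w μ η t ^ p)
          + C * (∫ t in (0:ℝ)..η, |u t| ^ p * Wp w p t / (FP w μ η t ^ p * GP w μ η t ^ 2))
          - L * |u η| ^ p := by
  obtain ⟨C, L, hC, hL, hardy⟩ := hardy_P_remainder_general p μ hp hμ
  refine ⟨C, L, hC, hL, fun u u' hu hu' ⟨a, ha, hua⟩ => ?_⟩
  have hw : ContinuousOn w (Ioc 0 η) := hw_smooth.continuousOn.mono Ioc_subset_Ioi_self
  have hw_pos' : ∀ t ∈ Ioc 0 η, 0 < w t := fun t ht => hw_pos t ht.1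
  have hu0 : ∀ᶠ t in 𝓝[>] 0, u t = 0 := by
    filter_upwards [Ioc_mem_nhdsGT ha] with t ht using hua t ht.2
  exact (hardy η hη w hw_pos' hw u u' hu (intervalIntegrable_abs_deriv_rpow_mul_Wp
    (zero_lt_one.trans hp) hη hw_pos' hw hu hu' hu0)).2.2
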